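/- There exist absolute constants 0 < c ≤ C such that for every integer p ≥ 2 and every integer k with 0 ≤ k ≤ log*_e p − 1, c · p / log_e^{(k)} p ≤ bell_k(p)^{1/p} ≤ C · p / log_e^{(k)} p. (Note that k ≤ log*_e p − 1 guarantees log_e^{(k)} p > 1.) -/

import Mathlib

/-- `Q` is a refinement of `P`: every part of `Q` is contained in some part of `P`. -/
def FPRefines {p : ℕ} (Q P : Finpartition (Finset.univ : Finset (Fin p))) : Prop :=
  ∀ a ∈ Q.parts, ∃ b ∈ P.parts, a ⊆ b

/-- `f = (T_1, …, T_k)` is a `k`-level (hierarchical) partition of `[p]`: each `T_{i+1}`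
is a refinement of `T_i`. -/
def IsKLevel {p : ℕ} (k : ℕ)
    (f : Fin k → Finpartition (Finset.univ : Finset (Fin p))) : Prop :=
  ∀ (i : ℕ) (h : i + 1 < k), FPRefines (f ⟨i + 1, h⟩) (f ⟨i, Nat.lt_of_succ_lt h⟩)

/-- The order-`k` Bell number `bell_k(p)`: the number of `k`-level hierarchical partitions
of `[p]` (so `bell_0(p) = 1`). -/
noncomputable def bellk (k p : ℕ) : ℕ :=
  Nat.card {f : Fin k → Finpartition (Finset.univ : Finset (Fin p)) // IsKLevel k f}

/-- The `k`-fold iterated natural logarithm, `log^{(0)} x = x`. -/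
noncomputable def iterLog (k : ℕ) (x : ℝ) : ℝ := Real.log^[k] x

/-- `log* x`: the smallest `k ≥ 0` such that `log^{(k)} x ≤ 1`. -/
noncomputable def logStar (x : ℝ) : ℕ := sInf {k : ℕ | iterLog k x ≤ 1}

/-!
Regard partitions of `[p]` as equivalence relations. Fixing the finest level, with `m` parts, the
coarser levels form a `(k - 1)`-level partition of the `m` parts, so
`bell_k(p) = ∑ m, S(p, m) * bell_{k-1}(m)` with `S` the Stirling numbers of the second kind.

*Upper bound.* Since `m! * S(p, m) ≤ m ^ p`, passing from `k - 1` to `k` replaces `x` by `e ^ x` in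
the bound for the exponential generating function. Hence `bell_k(p) * x ^ p / p!` is at most
`exp (exp^[k] x)`, and `x = log^{(k)} p` makes this `e ^ p`.

*Lower bound.* Since `m ^ n ≤ S(m + n, m)`, keeping the single summand `m = ⌊p / t⌋` gives
`m ^ (p - m) * bell_{k-1}(m) ≤ bell_k(p)`. Induction, with `e ^ t` as the new `t`, loses only a
constant factor in the `p`-th root because `m * t ≤ p`.
-/

/-- The number of chains `f 0 ≥ f 1 ≥ ⋯ ≥ f (k - 1)` in `P`, repetitions allowed. They are taken
antitone because the levels of a hierarchical partition are listed from coarse to fine. -/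
noncomputable def numChains (k : ℕ) (P : Type*) [Preorder P] : ℕ :=
  Nat.card {f : Fin k → P // Antitone f}

/-- The Stirling number of the second kind `S(|α|, m)`: the number of partitions of a finite type
`α` into `m` parts, encoded as equivalence relations with `m` classes. -/
noncomputable def numSetoids (α : Type*) (m : ℕ) : ℕ :=
  Nat.card {r : Setoid α // Nat.card (Quotient r) = m}

/-- The Stirling transform `p ↦ ∑ m, S(p, m) * a m` of a sequence, which turns `bell_k` into
`bell_{k+1}`. The sum stops at `m = p` because `S(p, m) = 0` beyond. -/
noncomputable def stirlingTransform {R : Type*} [Semiring R] (a : ℕ → R) (p : ℕ) : R :=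
  ∑ m ∈ Finset.range (p + 1), numSetoids (Fin p) m * a m

/-- The exponential generating function of `a` at `x`, truncated to its first `N` terms so that no
question of convergence arises. -/
noncomputable def truncEGF (a : ℕ → ℝ) (N : ℕ) (x : ℝ) : ℝ :=
  ∑ p ∈ Finset.range N, a p * (x ^ p / p.factorial)

section Chains

variable {P Q : Type*} [Preorder P] [Preorder Q] {k : ℕ}

variable (P) in
lemma numChains_zero : numChains 0 P = 1 := by
  rw [numChains, Nat.card_eq_one_iff_unique]
  exact ⟨inferInstance, ⟨⟨Fin.elim0, fun i ↦ i.elim0⟩⟩⟩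

variable (k) in
lemma numChains_congr (e : P ≃o Q) : numChains k P = numChains k Q :=
  Nat.card_congr <| ((Equiv.refl (Fin k)).arrowCongr e.toEquiv).subtypeEquiv fun f ↦ by
    simp [Antitone]

lemma antitone_snoc_iff {f : Fin k → P} {a : P} :
    Antitone (Fin.snoc f a : Fin (k + 1) → P) ↔ (∀ i, a ≤ f i) ∧ Antitone f := by
  simp [Antitone, Fin.forall_fin_succ', Fin.le_last, forall_and, and_comm]

variable (P k) in
/-- A chain of length `k + 1`, as its least element (the last entry) and a chain of length `k`
above it. -/
def chainsSuccEquiv :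
    {f : Fin (k + 1) → P // Antitone f} ≃ Σ a : P, {f : Fin k → Set.Ici a // Antitone f} :=
  calc {f : Fin (k + 1) → P // Antitone f}
    _ ≃ {x : P × (Fin k → P) // (∀ i, x.1 ≤ x.2 i) ∧ Antitone x.2} :=
      ((Fin.snocEquiv fun _ ↦ P).subtypeEquiv fun _ ↦ antitone_snoc_iff.symm).symm
    _ ≃ Σ a : P, {f : Fin k → P // (∀ i, a ≤ f i) ∧ Antitone f} :=
      .subtypeProdEquivSigmaSubtype fun (a : P) (f : Fin k → P) ↦ (∀ i, a ≤ f i) ∧ Antitone f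
    _ ≃ Σ a : P, {f : Fin k → Set.Ici a // Antitone f} :=
      .sigmaCongrRight fun _ ↦ (Equiv.subtypeSubtypeEquivSubtypeInter _ _).symm.trans
        (Equiv.subtypePiEquivPi.subtypeEquiv fun _ ↦ Iff.rfl)

lemma numChains_succ [Fintype P] : numChains (k + 1) P = ∑ a : P, numChains k (Set.Ici a) := by
  rw [numChains, Nat.card_congr (chainsSuccEquiv P k), Nat.card_sigma]
  rfl

end Chains

section Setoids

/-- Transport of equivalence relations along a bijection, as an order isomorphism. -/
def setoidCongr {α β : Type*} (e : α ≃ β) : Setoid α ≃o Setoid β where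
  toFun s := s.comap e.symm
  invFun s := s.comap e
  left_inv s := by ext; simp [Setoid.comap_rel]
  right_inv s := by ext; simp [Setoid.comap_rel]
  map_rel_iff' {s t} := by
    simp [Setoid.le_def, Setoid.comap_rel, e.symm.surjective.forall₂]

instance finite_setoid (α : Type*) [Finite α] : Finite (Setoid α) :=
  .of_injective (fun s x y ↦ s x y) fun _ _ h ↦ Setoid.ext fun x y ↦ by simp_all [funext_iff]

lemma factorial_mul_numSetoids_le_pow (α : Type*) [Finite α] (m : ℕ) :
    m.factorial * numSetoids α m ≤ m ^ Nat.card α := by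
  -- A partition into `m` parts with its parts labelled by `Fin m` is a surjection onto `Fin m`.
  let Labelled := Σ r : {r : Setoid α // Nat.card (Quotient r) = m}, Quotient r.1 ≃ Fin m
  let toFun : Labelled → α → Fin m := fun x a ↦ x.2 ⟦a⟧
  have ker_toFun (x : Labelled) : Setoid.ker (toFun x) = x.1.1 := by
    ext a b
    simp [toFun, Setoid.ker_def, Quotient.eq]
  have toFun_injective : Function.Injective toFun := by
    rintro ⟨r, e⟩ ⟨s, f⟩ h
    obtain rfl : r = s := Subtype.ext <| by rw [← ker_toFun ⟨r, e⟩, h, ker_toFun]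
    congr
    exact Equiv.ext <| Quotient.ind <| congrFun h
  have card_labelled : Nat.card Labelled = m.factorial * numSetoids α m := by
    have : Fintype {r : Setoid α // Nat.card (Quotient r) = m} := .ofFinite _
    have card_labellings (r : {r : Setoid α // Nat.card (Quotient r) = m}) :
        Nat.card (Quotient r.1 ≃ Fin m) = m.factorial := by
      rw [Nat.card_congr ((Finite.equivFinOfCardEq r.2).equivCongr (.refl _)), Nat.card_perm,
        Nat.card_fin]
    simp [Labelled, Nat.card_sigma, card_labellings, numSetoids, mul_comm]
  simpa [card_labelled, Nat.card_fun] using Nat.card_le_card_of_injective toFun toFun_injective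

lemma pow_le_numSetoids_sum (β γ : Type*) [Finite β] [Finite γ] :
    Nat.card β ^ Nat.card γ ≤ numSetoids (β ⊕ γ) (Nat.card β) := by
  have surjective_elim (g : γ → β) : Function.Surjective (Sum.elim id g) :=
    fun b ↦ ⟨.inl b, rfl⟩
  let toSetoid (g : γ → β) : {r : Setoid (β ⊕ γ) // Nat.card (Quotient r) = Nat.card β} :=
    ⟨Setoid.ker (Sum.elim id g),
      Nat.card_congr (Setoid.quotientKerEquivOfSurjective _ (surjective_elim g))⟩
  have toSetoid_injective : Function.Injective toSetoid := by
    intro g h hgh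
    ext c
    have hker : Setoid.ker (Sum.elim id g) = Setoid.ker (Sum.elim id h) := congrArg Subtype.val hgh
    have hg : Setoid.ker (Sum.elim id g) (.inl (g c)) (.inr c) := rfl
    rw [hker] at hg
    exact hg
  simpa [numSetoids, Nat.card_fun] using Nat.card_le_card_of_injective toSetoid toSetoid_injective

end Setoids

section Finpartition

variable {α : Type*} [Fintype α] [DecidableEq α]

lemma ker_part_le_ker_part_iff {P Q : Finpartition (Finset.univ : Finset α)} :
    Setoid.ker P.part ≤ Setoid.ker Q.part ↔ P ≤ Q := by
  constructor
  · intro h b hb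
    obtain ⟨x, hx⟩ := P.nonempty_of_mem_parts hb
    refine ⟨Q.part x, by simp, fun y hy ↦ ?_⟩
    have hP : P.part x = P.part y := by
      rw [P.part_eq_of_mem hb hx, P.part_eq_of_mem hb hy]
    have hQ : Q.part x = Q.part y := h hP
    simp [hQ]
  · intro h x y (hxy : P.part x = P.part y)
    obtain ⟨c, hc, hPc⟩ := h (P.part_mem.2 (Finset.mem_univ x))
    have hx : x ∈ c := hPc (by simp)
    have hy : y ∈ c := hPc (by simp [hxy])
    exact (Q.part_eq_of_mem hc hx).trans (Q.part_eq_of_mem hc hy).symm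

lemma ker_part_ofSetoid (s : Setoid α) [DecidableRel s.r] :
    Setoid.ker (Finpartition.ofSetoid s).part = s := by
  ext x y
  rw [Setoid.ker_def,
    ← Finpartition.mem_part_iff_part_eq_part _ (Finset.mem_univ _) (Finset.mem_univ _),
    Finpartition.mem_part_ofSetoid_iff_rel, s.comm']

variable (α) in
/-- Partitions of a finite type correspond to equivalence relations, refinement being inclusion of
relations; a partition is sent to the relation of lying in the same part. -/
noncomputable def finpartitionOrderIsoSetoid :
    Finpartition (Finset.univ : Finset α) ≃o Setoid α :=
  .ofSurjective (OrderEmbedding.ofMapLEIff (fun P ↦ Setoid.ker P.part)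
      fun _ _ ↦ ker_part_le_ker_part_iff)
    fun s ↦ by classical exact ⟨.ofSetoid s, ker_part_ofSetoid s⟩

end Finpartition

section Bell

lemma isKLevel_iff_antitone {k p : ℕ} {f : Fin k → Finpartition (Finset.univ : Finset (Fin p))} :
    IsKLevel k f ↔ Antitone f := by
  cases k with
  | zero => exact ⟨fun _ i ↦ i.elim0, fun _ i h ↦ absurd h (by lia)⟩
  | succ k =>
    rw [Fin.antitone_iff_succ_le, Fin.forall_iff]
    exact ⟨fun h i hi ↦ h i (Nat.succ_lt_succ hi), fun h i hi ↦ h i (Nat.lt_of_succ_lt_succ hi)⟩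

variable (k : ℕ) (α : Type*) [Finite α]

lemma bellk_natCard : bellk k (Nat.card α) = numChains k (Setoid α) := by
  rw [numChains_congr k (setoidCongr (Finite.equivFin α)),
    ← numChains_congr k (finpartitionOrderIsoSetoid _), bellk, numChains]
  simp only [isKLevel_iff_antitone]

lemma bellk_zero (p : ℕ) : bellk 0 p = 1 := by
  rw [← Nat.card_fin p, bellk_natCard, numChains_zero]

variable {α} in
lemma natCard_quotient_le (r : Setoid α) : Nat.card (Quotient r) ≤ Nat.card α :=
  Nat.card_le_card_of_surjective _ Quotient.mk_surjective

variable {α} in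
lemma numChains_Ici_setoid (r : Setoid α) :
    numChains k (Set.Ici r) = bellk k (Nat.card (Quotient r)) := by
  rw [bellk_natCard]
  exact numChains_congr k (Setoid.correspondence r)

lemma bellk_succ_natCard :
    bellk (k + 1) (Nat.card α) =
      ∑ m ∈ Finset.range (Nat.card α + 1), numSetoids α m * bellk k m := by
  classical
  have : Fintype (Setoid α) := .ofFinite _
  rw [bellk_natCard, numChains_succ]
  simp only [numChains_Ici_setoid]
  rw [← Finset.sum_fiberwise_of_maps_to' (g := fun r : Setoid α ↦ Nat.card (Quotient r))
    (fun r _ ↦ Finset.mem_range_succ_iff.2 (natCard_quotient_le r)) (bellk k)]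
  simp [numSetoids, Fintype.card_subtype]

lemma bellk_succ (p : ℕ) : bellk (k + 1) p = stirlingTransform (bellk k) p := by
  simpa [stirlingTransform] using bellk_succ_natCard k (Fin p)

lemma pow_mul_bellk_le_bellk_succ (m n : ℕ) : m ^ n * bellk k m ≤ bellk (k + 1) (m + n) := by
  have hsucc := bellk_succ_natCard k (Fin m ⊕ Fin n)
  have hpow := pow_le_numSetoids_sum (Fin m) (Fin n)
  simp only [Nat.card_sum, Nat.card_fin] at hsucc hpow
  calc m ^ n * bellk k m
    _ ≤ numSetoids (Fin m ⊕ Fin n) m * bellk k m := by gcongr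
    _ ≤ bellk (k + 1) (m + n) := hsucc ▸ Finset.single_le_sum
      (f := fun q ↦ numSetoids (Fin m ⊕ Fin n) q * bellk k q) (fun _ _ ↦ Nat.zero_le _)
      (Finset.mem_range_succ_iff.2 (Nat.le_add_right m n))

lemma bellk_pos (p : ℕ) : 0 < bellk k p := by
  induction k with
  | zero => simp [bellk_zero]
  | succ k ih => exact ih.trans_le (by simpa using pow_mul_bellk_le_bellk_succ k p 0)

end Bell

section UpperBound

variable {x : ℝ}

lemma truncEGF_one_le_exp (hx : 0 ≤ x) (N : ℕ) : truncEGF (fun _ ↦ 1) N x ≤ Real.exp x := by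
  simpa [truncEGF] using Real.sum_le_exp_of_nonneg hx N

lemma truncEGF_numSetoids_le (hx : 0 ≤ x) (m N : ℕ) :
    truncEGF (fun p ↦ numSetoids (Fin p) m) N x ≤ Real.exp x ^ m / m.factorial := by
  have numSetoids_le (p : ℕ) : (numSetoids (Fin p) m : ℝ) ≤ m ^ p / m.factorial := by
    rw [le_div_iff₀' (mod_cast m.factorial_pos)]
    exact_mod_cast Nat.card_fin p ▸ factorial_mul_numSetoids_le_pow (Fin p) m
  calc ∑ p ∈ Finset.range N, numSetoids (Fin p) m * (x ^ p / p.factorial)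
    _ ≤ ∑ p ∈ Finset.range N, m ^ p / m.factorial * (x ^ p / p.factorial) := by
      gcongr with p
      exact numSetoids_le p
    _ = (∑ p ∈ Finset.range N, (m * x) ^ p / p.factorial) / m.factorial := by
      rw [Finset.sum_div]
      exact Finset.sum_congr rfl fun p _ ↦ by ring
    _ ≤ Real.exp (m * x) / m.factorial := by
      gcongr
      exact Real.sum_le_exp_of_nonneg (by positivity) N
    _ = Real.exp x ^ m / m.factorial := by rw [Real.exp_nat_mul]

lemma truncEGF_stirlingTransform_le {a : ℕ → ℝ} (ha : ∀ m, 0 ≤ a m) (hx : 0 ≤ x) (N : ℕ) :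
    truncEGF (stirlingTransform a) N x ≤ truncEGF a N (Real.exp x) := by
  calc ∑ p ∈ Finset.range N,
        (∑ m ∈ Finset.range (p + 1), numSetoids (Fin p) m * a m) * (x ^ p / p.factorial)
    _ ≤ ∑ p ∈ Finset.range N,
        (∑ m ∈ Finset.range N, numSetoids (Fin p) m * a m) * (x ^ p / p.factorial) := by
      gcongr with p hp m
      · exact fun m _ _ ↦ mul_nonneg (Nat.cast_nonneg _) (ha m)
      · exact Finset.mem_range.1 hp
    _ = ∑ m ∈ Finset.range N, a m * truncEGF (fun p ↦ numSetoids (Fin p) m) N x := by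
      simp only [truncEGF, Finset.sum_mul, Finset.mul_sum]
      rw [Finset.sum_comm]
      exact Finset.sum_congr rfl fun m _ ↦ Finset.sum_congr rfl fun p _ ↦ by ring
    _ ≤ ∑ m ∈ Finset.range N, a m * (Real.exp x ^ m / m.factorial) := by
      gcongr with m
      · exact ha m
      · exact truncEGF_numSetoids_le hx m N

lemma truncEGF_bellk_le (k : ℕ) (hx : 0 ≤ x) (N : ℕ) :
    truncEGF (fun p ↦ bellk k p) N x ≤ Real.exp (Real.exp^[k] x) := by
  induction k generalizing x with
  | zero => simpa [bellk_zero] using truncEGF_one_le_exp hx N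
  | succ k ih =>
    calc truncEGF (fun p ↦ bellk (k + 1) p) N x
      _ = truncEGF (stirlingTransform fun m ↦ (bellk k m : ℝ)) N x := by
        congr 1 with p
        simp [bellk_succ, stirlingTransform]
      _ ≤ truncEGF (fun m ↦ bellk k m) N (Real.exp x) :=
        truncEGF_stirlingTransform_le (fun _ ↦ Nat.cast_nonneg _) hx N
      _ ≤ Real.exp (Real.exp^[k + 1] x) := ih (Real.exp_pos x).le

lemma bellk_mul_pow_le (k p : ℕ) (hx : 0 ≤ x) :
    bellk k p * x ^ p ≤ p.factorial * Real.exp (Real.exp^[k] x) := by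
  have hterm : bellk k p * (x ^ p / p.factorial) ≤ Real.exp (Real.exp^[k] x) :=
    (Finset.single_le_sum (f := fun q : ℕ ↦ bellk k q * (x ^ q / q.factorial))
      (fun _ _ ↦ by positivity) (Finset.self_mem_range_succ p)).trans
      (truncEGF_bellk_le k hx (p + 1))
  rwa [← mul_div_assoc, div_le_iff₀' (mod_cast p.factorial_pos)] at hterm

lemma bellk_le_pow {k p : ℕ} (hx : 0 < x) (hxp : Real.exp^[k] x ≤ p) :
    (bellk k p : ℝ) ≤ (Real.exp 1 * p / x) ^ p := by
  rw [div_pow, le_div_iff₀ (by positivity)]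
  calc bellk k p * x ^ p
    _ ≤ p.factorial * Real.exp (Real.exp^[k] x) := bellk_mul_pow_le k p hx.le
    _ ≤ p ^ p * Real.exp p := by
      gcongr
      exact_mod_cast p.factorial_le_pow
    _ = (Real.exp 1 * p) ^ p := by rw [mul_pow, Real.exp_one_pow, mul_comm]

end UpperBound

section LowerBound

-- Of `e⁻⁴ = e⁻¹ * e⁻³`, the factor `e⁻¹` pays for rounding `(m + n) / t` down to `m`, and `e⁻³`
-- pays for the factors `e⁻⁴ / exp t` on the right.
lemma exp_neg_four_mul_div_pow_le_pow_mul_pow {t : ℝ} (ht : 2 ≤ t) {m n : ℕ}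
    (hmt : m * t ≤ (m + n : ℕ)) (hm : Real.exp (-1) * ((m + n : ℕ) / t) ≤ m) :
    (Real.exp (-4) * (m + n : ℕ) / t) ^ (m + n) ≤
      m ^ n * (Real.exp (-4) * m / Real.exp t) ^ m := by
  have hexp : (m : ℝ) * (4 + t) ≤ (m + n : ℕ) * 3 := by
    have : (m : ℝ) * 2 ≤ m * t := by gcongr
    linarith
  calc (Real.exp (-4) * (m + n : ℕ) / t) ^ (m + n)
    _ = (Real.exp (-1) * ((m + n : ℕ) / t)) ^ (m + n) * Real.exp (-((m + n : ℕ) * 3)) := by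
      rw [← mul_neg, Real.exp_nat_mul, ← mul_pow, show (-4 : ℝ) = -1 + -3 by norm_num, Real.exp_add]
      ring
    _ ≤ m ^ (m + n) * Real.exp (-(m * (4 + t))) := by gcongr
    _ = m ^ n * (Real.exp (-4) * m / Real.exp t) ^ m := by
      rw [← mul_neg, Real.exp_nat_mul, neg_add, Real.exp_add, Real.exp_neg t]
      ring

lemma exp_neg_four_mul_div_pow_le_bellk_of_le (k : ℕ) {p : ℕ} {t : ℝ} (hpt : p ≤ t) :
    (Real.exp (-4) * p / t) ^ p ≤ bellk k p := by
  have ht : 0 ≤ t := p.cast_nonneg.trans hpt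
  have hbase : Real.exp (-4) * p / t ≤ 1 :=
    div_le_one_of_le₀ ((mul_le_of_le_one_left p.cast_nonneg (by simp)).trans hpt) ht
  calc (Real.exp (-4) * p / t) ^ p
    _ ≤ 1 := pow_le_one₀ (by positivity) hbase
    _ ≤ bellk k p := mod_cast bellk_pos k p

lemma exp_neg_four_mul_div_pow_le_bellk {k p : ℕ} {t : ℝ} (ht : 2 ≤ t)
    (hp : p ≤ Real.exp^[k] t) : (Real.exp (-4) * p / t) ^ p ≤ bellk k p := by
  induction k generalizing p t with
  | zero => exact exp_neg_four_mul_div_pow_le_bellk_of_le 0 hp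
  | succ k ih =>
    obtain hpt | htp := le_or_gt (p : ℝ) t
    · exact exp_neg_four_mul_div_pow_le_bellk_of_le (k + 1) hpt
    have ht₀ : 0 < t := by linarith
    obtain ⟨m, hm⟩ : ∃ m, m = ⌊(p : ℝ) / t⌋₊ := ⟨_, rfl⟩
    have hm_le : (m : ℝ) ≤ p / t := hm ▸ Nat.floor_le (by positivity)
    have hm_ge : (p : ℝ) / t / 2 < m := hm ▸ Nat.div_two_lt_floor ((one_le_div₀ ht₀).2 htp.le)
    have hmp : (m : ℝ) ≤ p := hm_le.trans (div_le_self p.cast_nonneg (by linarith))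
    obtain ⟨n, rfl⟩ := Nat.exists_eq_add_of_le (Nat.cast_le.1 hmp)
    have hm_exp : Real.exp (-1) * ((m + n : ℕ) / t) ≤ m :=
      calc Real.exp (-1) * ((m + n : ℕ) / t)
        _ ≤ 1 / 2 * ((m + n : ℕ) / t) := by
          gcongr
          exact Real.exp_neg_one_lt_half.le
        _ ≤ m := by linarith
    calc (Real.exp (-4) * (m + n : ℕ) / t) ^ (m + n)
      _ ≤ m ^ n * (Real.exp (-4) * m / Real.exp t) ^ m :=
        exp_neg_four_mul_div_pow_le_pow_mul_pow ht ((le_div_iff₀ ht₀).1 hm_le) hm_exp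
      _ ≤ m ^ n * bellk k m := by
        gcongr
        exact ih (by linarith [Real.add_one_le_exp t]) (hmp.trans hp)
      _ ≤ bellk (k + 1) (m + n) := mod_cast pow_mul_bellk_le_bellk_succ k m n

end LowerBound

section IterLog

lemma one_lt_iterLog {x : ℝ} (hx : 1 < x) {k : ℕ} (hk : k ≤ logStar x - 1) : 1 < iterLog k x := by
  obtain rfl | hpos := k.eq_zero_or_pos
  · exact hx
  · exact not_le.1 (Nat.notMem_of_lt_sInf (show k < logStar x by lia))

lemma exp_iterate_iterLog {k : ℕ} {x : ℝ} (hx : ∀ j < k, 0 < iterLog j x) :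
    Real.exp^[k] (iterLog k x) = x := by
  induction k with
  | zero => rfl
  | succ k ih =>
    have iterLog_succ : iterLog (k + 1) x = Real.log (iterLog k x) :=
      Function.iterate_succ_apply' ..
    rw [iterLog_succ, Function.iterate_succ_apply, Real.exp_log (hx k k.lt_succ_self)]
    exact ih fun j hj ↦ hx j (hj.trans k.lt_succ_self)

end IterLog

/-- There are absolute constants `0 < c ≤ C` such that for every
integer `p ≥ 2` and every `0 ≤ k ≤ log* p − 1`,
`c · p / log^{(k)} p ≤ bell_k(p)^{1/p} ≤ C · p / log^{(k)} p`. -/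
theorem bellk_asymptotics_small_k :
    ∃ c C : ℝ, 0 < c ∧ c ≤ C ∧
      ∀ p : ℕ, 2 ≤ p → ∀ k : ℕ, k ≤ logStar p - 1 →
        c * p / iterLog k p ≤ (bellk k p : ℝ) ^ (1 / (p : ℝ)) ∧
        (bellk k p : ℝ) ^ (1 / (p : ℝ)) ≤ C * p / iterLog k p := by
  refine ⟨Real.exp (-4) / 2, Real.exp 1, by positivity, ?_, fun p hp k hk ↦ ?_⟩
  · linarith [Real.exp_le_exp.2 (show (-4 : ℝ) ≤ 1 by norm_num), Real.exp_pos (-4)]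
  have hlog {j : ℕ} (hj : j ≤ k) : 1 < iterLog j p :=
    one_lt_iterLog (mod_cast hp) (hj.trans hk)
  have hx : 1 < iterLog k p := hlog le_rfl
  have hexp : Real.exp^[k] (iterLog k p) = p :=
    exp_iterate_iterLog fun j hj ↦ one_pos.trans (hlog hj.le)
  have hp₀ : (0 : ℝ) < p := by positivity
  rw [one_div]
  constructor
  · rw [Real.le_rpow_inv_iff_of_pos (by positivity) (by positivity) hp₀, Real.rpow_natCast]
    -- The lower bound needs `2 ≤ t`; doubling `iterLog k p` ensures this and costs a factor `2`.
    have hp_le : p ≤ Real.exp^[k] (2 * iterLog k p) :=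
      hexp.symm.le.trans (Real.exp_monotone.iterate k (by linarith))
    convert exp_neg_four_mul_div_pow_le_bellk (by linarith) hp_le using 2
    ring
  · rw [Real.rpow_inv_le_iff_of_pos (by positivity) (by positivity) hp₀, Real.rpow_natCast]
    exact bellk_le_pow (by positivity) hexp.le
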